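/- Let A be an n-by-n consistent reciprocal matrix. Then a positive n-vector w is efficient for A if and only if w is a positive scalar multiple of a column of A; equivalently, w is efficient for A if and only if w_i/w_j = a_ij for all i, j. -/

import Mathlib

/-- An n-by-n positive matrix is reciprocal if `A j i = 1 / A i j` for all `i, j`. -/
def Reciprocal {n : ℕ} (A : Matrix (Fin n) (Fin n) ℝ) : Prop :=
  (∀ i j, 0 < A i j) ∧ ∀ i j, A j i = 1 / A i j

/-- A positive vector `w` is efficient for a reciprocal matrix `A` if every positive
vector `v` with `|v i / v j - A i j| ≤ |w i / w j - A i j|` entrywise is a positive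
scalar multiple of `w`. -/
def Efficient {n : ℕ} (A : Matrix (Fin n) (Fin n) ℝ) (w : Fin n → ℝ) : Prop :=
  ∀ v : Fin n → ℝ, (∀ i, 0 < v i) →
    (∀ i j, |v i / v j - A i j| ≤ |w i / w j - A i j|) →
    ∃ c : ℝ, 0 < c ∧ v = fun i => c * w i

/-!
Each column of a positive consistent matrix `A` has deviation zero from `A`, so it satisfies the
entrywise inequality in the definition of efficiency against every `w`: an efficient `w` must be
proportional to it. Conversely, if the ratios of `w` reproduce `A`, the inequality forces any
competitor to have the same ratios as `w`, and a positive vector is determined by its ratios up to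
a positive scalar.
-/

section Consistency

variable {ι K : Type*}

theorem exists_pos_mul_eq_iff_div_eq_div [Field K] [LinearOrder K] [IsStrictOrderedRing K]
    {v w : ι → K} (hv : ∀ i, 0 < v i) (hw : ∀ i, 0 < w i) :
    (∃ c : K, 0 < c ∧ v = fun i => c * w i) ↔ ∀ i j, v i / v j = w i / w j := by
  constructor
  · rintro ⟨c, hc, rfl⟩ i j
    exact mul_div_mul_left _ _ hc.ne'
  · intro h
    obtain _ | ⟨⟨k⟩⟩ := isEmpty_or_nonempty ι
    · exact ⟨1, one_pos, Subsingleton.elim _ _⟩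
    · refine ⟨v k / w k, div_pos (hv k) (hw k), funext fun i => ?_⟩
      calc v i = v i / v k * v k := (div_mul_cancel₀ _ (hv k).ne').symm
        _ = w i / w k * v k := by rw [h]
        _ = v k / w k * w i := by ring

/-- Consistency of a matrix of pairwise comparisons: the comparison of `i` with `k` is the product
of those of `i` with `j` and of `j` with `k`. Positivity and reciprocity are not part of the
definition. -/
def Consistent [Mul K] (A : Matrix ι ι K) : Prop :=
  ∀ i j k, A i j * A j k = A i k

namespace Consistent

theorem div_eq [GroupWithZero K] {A : Matrix ι ι K} (hA : Consistent A) {j k : ι}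
    (hjk : A j k ≠ 0) (i : ι) : A i k / A j k = A i j :=
  (div_eq_iff hjk).mpr (hA i j k).symm

theorem exists_pos_mul_col_iff_div_eq [Field K] [LinearOrder K] [IsStrictOrderedRing K]
    [Nonempty ι] {A : Matrix ι ι K} (hA : Consistent A) (hpos : ∀ i j, 0 < A i j)
    {w : ι → K} (hw : ∀ i, 0 < w i) :
    (∃ c : K, 0 < c ∧ ∃ j, w = fun i => c * A i j) ↔ ∀ i j, w i / w j = A i j := by
  have col_iff (k : ι) :
      (∃ c : K, 0 < c ∧ w = fun i => c * A i k) ↔ ∀ i j, w i / w j = A i j := by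
    simpa only [hA.div_eq (hpos _ k).ne'] using
      exists_pos_mul_eq_iff_div_eq_div hw (fun i => hpos i k)
  constructor
  · rintro ⟨c, hc, k, hwk⟩
    exact (col_iff k).mp ⟨c, hc, hwk⟩
  · intro h
    obtain ⟨k⟩ := ‹Nonempty ι›
    obtain ⟨c, hc, hwk⟩ := (col_iff k).mpr h
    exact ⟨c, hc, k, hwk⟩

end Consistent

end Consistency

section Efficiency

variable {n : ℕ} {A : Matrix (Fin n) (Fin n) ℝ} {w : Fin n → ℝ}

theorem efficient_of_div_eq (hw : ∀ i, 0 < w i) (h : ∀ i j, w i / w j = A i j) :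
    Efficient A w := by
  intro v hv hle
  have ratio_eq (i j : Fin n) : v i / v j = w i / w j := by
    have deviation_nonpos : |v i / v j - A i j| ≤ 0 := by simpa [h i j] using hle i j
    rw [h i j]
    exact sub_eq_zero.mp (abs_nonpos_iff.mp deviation_nonpos)
  exact (exists_pos_mul_eq_iff_div_eq_div hv hw).mpr ratio_eq

theorem Efficient.div_eq_of_consistent (h : Efficient A w) (hA : Consistent A)
    (hpos : ∀ i j, 0 < A i j) (i j : Fin n) : w i / w j = A i j := by
  have col_ratio (k l : Fin n) : A k j / A l j = A k l := hA.div_eq (hpos l j).ne' k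
  obtain ⟨c, hc, hcol⟩ := h (fun k => A k j) (fun k => hpos k j) fun k l => by
    simp only [col_ratio, sub_self, abs_zero, abs_nonneg]
  have col_eq_mul (k : Fin n) : A k j = c * w k := congrFun hcol k
  calc w i / w j = c * w i / (c * w j) := (mul_div_mul_left _ _ hc.ne').symm
    _ = A i j / A j j := by rw [← col_eq_mul, ← col_eq_mul]
    _ = A i j := col_ratio i j

theorem Consistent.efficient_iff_div_eq (hA : Consistent A) (hpos : ∀ i j, 0 < A i j)
    (hw : ∀ i, 0 < w i) : Efficient A w ↔ ∀ i j, w i / w j = A i j :=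
  ⟨fun h => h.div_eq_of_consistent hA hpos, efficient_of_div_eq hw⟩

end Efficiency

/-- For a consistent reciprocal matrix, a positive vector is efficient iff it is a
positive scalar multiple of a column, equivalently iff `w i / w j = A i j` for all
`i, j`. -/
theorem stmt_15 {n : ℕ} (hn : 0 < n) (A : Matrix (Fin n) (Fin n) ℝ)
    (hA : Reciprocal A) (hcons : ∀ i j k, A i j * A j k = A i k)
    (w : Fin n → ℝ) (hw : ∀ i, 0 < w i) :
    (Efficient A w ↔ ∃ c : ℝ, 0 < c ∧ ∃ j : Fin n, w = fun i => c * A i j) ∧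
      (Efficient A w ↔ ∀ i j, w i / w j = A i j) := by
  have hA_consistent : Consistent A := hcons
  have : Nonempty (Fin n) := Fin.pos_iff_nonempty.mp hn
  have efficient_iff_ratio := hA_consistent.efficient_iff_div_eq hA.1 hw
  have col_iff_ratio := hA_consistent.exists_pos_mul_col_iff_div_eq hA.1 hw
  exact ⟨efficient_iff_ratio.trans col_iff_ratio.symm, efficient_iff_ratio⟩
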